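/- arXiv:2605.27572 — 3 statements merged into one kernel-verified Lean document; each statement's English description precedes it below -/
import Mathlib

section
/- Under the one-dimensional resonator setting, assume that k_0·ℓ_{i,i+1} ∉ π·ℤ for every 1 ≤ i ≤ N−1. Then for every i ∈ 𝒥 with 1 < i < N, the diagonal entry of the frequency-dependent capacitance matrix equals 𝒞_{ii}(ω_0) = (δ_i v_i²)/(v ℓ_i) · ( cot(k_0 ℓ_{i−1,i}) + cot(k_0 ℓ_{i,i+1}) ). -/
/-! The vector `g_i` is supported on resonator `i`, so only the summand at `i` survives in the
pairing `⟨𝒯_k g_i, g_i⟩`, and the cosecant terms of `𝒯_k g_i` at `i`, which read neighbouring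
resonators, vanish there. What remains is `-k a² (cot(k ℓ_{i-1,i}) + s² cot(k ℓ_{i,i+1}))` with
`s² = 1` and `a² = 2/ℓ_i`; multiplying by `-δ_i v_i²/(2ω_0)` with `k = ω_0/v` gives the formula. -/

open scoped Real

noncomputable section

/-- Real cotangent. -/
def rcot (x : ℝ) : ℝ := Real.cos x / Real.sin x

/-- Real cosecant. -/
def rcsc (x : ℝ) : ℝ := 1 / Real.sin x

/-- The bilinear pairing `⟨f,h⟩ = Σ_{i=1}^N (f_i^- h_i^- + f_i^+ h_i^+)` on the boundary
space `ℂ^{2N}`; the coordinate pair at index `i` is `(f_i^-, f_i^+)`. -/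
def pair1d (N : ℕ) (f h : ℕ → ℂ × ℂ) : ℂ :=
  ∑ i ∈ Finset.Icc 1 N, ((f i).1 * (h i).1 + (f i).2 * (h i).2)

/-- The exterior Dirichlet-to-Neumann matrix `𝒯_k` on `ℂ^{2N}`; `L t` denotes the
spacing `ℓ_{t,t+1}`. -/
def dtn1d (N : ℕ) (L : ℕ → ℝ) (k : ℝ) (f : ℕ → ℂ × ℂ) : ℕ → ℂ × ℂ := fun j =>
  (if j = 1 then Complex.I * (k : ℂ) * (f 1).1
   else ((k * rcsc (k * L (j - 1)) : ℝ) : ℂ) * (f (j - 1)).2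
        - ((k * rcot (k * L (j - 1)) : ℝ) : ℂ) * (f j).1,
   if j = N then Complex.I * (k : ℂ) * (f N).2
   else -((k * rcot (k * L j) : ℝ) : ℂ) * (f j).2
        + ((k * rcsc (k * L j) : ℝ) : ℂ) * (f (j + 1)).1)

/-- The boundary trace vector `g_j ∈ ℂ^{2N}`: `(g_j)_j^- = a_j`, `(g_j)_j^+ = s_j a_j`
with `a_j = √(2/ℓ_j)`, `s_j = (-1)^{n_j}`, all other coordinates zero. -/
def gvec1d (j : ℕ) (ℓj : ℝ) (nj : ℕ) : ℕ → ℂ × ℂ := fun i =>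
  if i = j then ((Real.sqrt (2 / ℓj) : ℂ), (-1 : ℂ) ^ nj * (Real.sqrt (2 / ℓj) : ℂ))
  else (0, 0)


/-- The diagonal pairing at an interior resonator, for arbitrary spacings `L`, wave number `k` and
nonnegative length `l`. -/
lemma pair1d_dtn1d_gvec1d (N : ℕ) (L : ℕ → ℝ) (k l : ℝ) (hl : 0 ≤ l) (i n : ℕ)
    (hi1 : 1 < i) (hiN : i < N) :
    pair1d N (dtn1d N L k (gvec1d i l n)) (gvec1d i l n)
      = -(2 * k / l * (rcot (k * L (i - 1)) + rcot (k * L i)) : ℝ) := by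
  have ha : ((Real.sqrt (2 / l) : ℝ) : ℂ) ^ 2 = ((2 / l : ℝ) : ℂ) := by
    rw [← Complex.ofReal_pow, Real.sq_sqrt (by positivity)]
  have hs : ((-1 : ℂ) ^ n) ^ 2 = 1 := by
    rw [← pow_mul, mul_comm, pow_mul]; norm_num
  have h1 : i ≠ 1 := by omega
  have h2 : i ≠ N := by omega
  have h3 : i - 1 ≠ i := by omega
  unfold pair1d
  rw [Finset.sum_eq_single_of_mem i (Finset.mem_Icc.mpr ⟨hi1.le, hiN.le⟩)
    (fun j _ hj => by simp [gvec1d, hj])]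
  simp only [dtn1d, gvec1d, h1, h2, h3, if_true, if_false, Nat.succ_ne_self]
  push_cast at ha ⊢
  linear_combination
    (-(k * rcot (k * L (i - 1)) : ℂ) - (k * rcot (k * L i) : ℂ) * ((-1 : ℂ) ^ n) ^ 2) * ha
      - (k * rcot (k * L i) : ℂ) * (2 / l) * hs

/-- interior diagonal entries of the one-dimensional frequency-dependent
capacitance matrix: for `i ∈ 𝒥` with `1 < i < N`,
`𝒞_{ii}(ω_0) = (δ_i v_i²)/(v ℓ_i) (cot(k_0 ℓ_{i-1,i}) + cot(k_0 ℓ_{i,i+1}))`. -/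
theorem capacitance_diagonal_interior
    (N : ℕ) (hN : 2 ≤ N)
    (xm xp : ℕ → ℝ)
    (hord : ∀ i, 1 ≤ i → i ≤ N → xm i < xp i)
    (hsep : ∀ i, 1 ≤ i → i < N → xp i < xm (i + 1))
    (v ω0 : ℝ) (hv : 0 < v) (hω0 : ω0 ≠ 0)
    (vj : ℕ → ℝ) (hvj : ∀ j, 1 ≤ j → j ≤ N → 0 < vj j)
    (δj : ℕ → ℂ)
    (hnores : ∀ i, 1 ≤ i → i < N → ∀ m : ℤ,
      ω0 / v * (xm (i + 1) - xp i) ≠ (m : ℝ) * π)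
    (i ni : ℕ) (hi1 : 1 < i) (hiN : i < N)
    (hni : 0 < ni)
    (hresi : ω0 / vj i * (xp i - xm i) = (ni : ℝ) * π) :
    -(δj i * (vj i : ℂ) ^ 2) / (2 * (ω0 : ℂ)) *
      pair1d N
        (dtn1d N (fun t => xm (t + 1) - xp t) (ω0 / v) (gvec1d i (xp i - xm i) ni))
        (gvec1d i (xp i - xm i) ni)
    = δj i * (vj i : ℂ) ^ 2 / ((v : ℂ) * ((xp i - xm i : ℝ) : ℂ)) *
        ((rcot (ω0 / v * (xm i - xp (i - 1))) + rcot (ω0 / v * (xm (i + 1) - xp i)) : ℝ) : ℂ) := by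
  have hl : 0 < xp i - xm i := sub_pos.mpr (hord i hi1.le hiN.le)
  rw [pair1d_dtn1d_gvec1d N _ _ _ hl.le i ni hi1 hiN]
  -- The spacing to the left is indexed by `i - 1`, with natural-number subtraction.
  simp only [Nat.sub_add_cancel hi1.le]
  generalize xp i - xm i = l at hl ⊢
  generalize rcot _ = c
  generalize rcot _ = d
  have hl' : (l : ℂ) ≠ 0 := by exact_mod_cast hl.ne'
  have hv' : (v : ℂ) ≠ 0 := by exact_mod_cast hv.ne'
  have hω' : (ω0 : ℂ) ≠ 0 := by exact_mod_cast hω0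
  push_cast
  field_simp

end
end

section
/- Under the one-dimensional resonator setting, assume that k_0·ℓ_{i,i+1} ∉ π·ℤ for every 1 ≤ i ≤ N−1. Then for every 1 ≤ i ≤ N−1 with both i ∈ 𝒥 and i+1 ∈ 𝒥, the off-diagonal entries of the frequency-dependent capacitance matrix equal 𝒞_{i,i+1}(ω_0) = −(δ_i v_i²)/(v·√(ℓ_i ℓ_{i+1})) · s_i · csc(k_0 ℓ_{i,i+1}) and 𝒞_{i+1,i}(ω_0) = −(δ_{i+1} v_{i+1}²)/(v·√(ℓ_i ℓ_{i+1})) · s_i · csc(k_0 ℓ_{i,i+1}). -/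
/-!
Pairing with the trace vector `g_i` only reads the two coordinates at resonator `i`
(`pair1d_gvec1d`). Since `𝒯_k` couples distinct resonators only across the gap between
neighbours, `𝒯_k g_{i+1}` has at resonator `i` the single nonzero coordinate
`k csc(k ℓ_{i,i+1}) a_{i+1}` at the right endpoint, and `𝒯_k g_i` has at resonator `i + 1` the
single nonzero coordinate `k csc(k ℓ_{i,i+1}) s_i a_i` at the left endpoint. Both pairings are
therefore `k csc(k ℓ_{i,i+1}) s_i a_i a_{i+1}`, and the claim follows from
`a_i a_{i+1} = 2 / √(ℓ_i ℓ_{i+1})` and `k = ω_0 / v`.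
-/

open scoped Real

noncomputable section

theorem pair1d_gvec1d (N : ℕ) (f : ℕ → ℂ × ℂ) (j : ℕ) (l : ℝ) (n : ℕ)
    (hj1 : 1 ≤ j) (hjN : j ≤ N) :
    pair1d N f (gvec1d j l n) =
      (f j).1 * (Real.sqrt (2 / l) : ℂ) + (f j).2 * ((-1 : ℂ) ^ n * (Real.sqrt (2 / l) : ℂ)) := by
  unfold pair1d
  rw [Finset.sum_eq_single_of_mem j (Finset.mem_Icc.2 ⟨hj1, hjN⟩)]
  · simp [gvec1d]
  · intro b _ hb
    simp [gvec1d, hb]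

theorem dtn1d_gvec1d_succ (N : ℕ) (L : ℕ → ℝ) (k : ℝ) (i : ℕ) (l : ℝ) (n : ℕ)
    (hiN : i < N) :
    dtn1d N L k (gvec1d (i + 1) l n) i =
      (0, ((k * rcsc (k * L i) : ℝ) : ℂ) * (Real.sqrt (2 / l) : ℂ)) := by
  have h1 : i - 1 ≠ i + 1 := by omega
  by_cases hi : i = 1
  · subst hi
    simp [dtn1d, gvec1d, hiN.ne]
  · simp [dtn1d, gvec1d, hiN.ne, hi, h1]

theorem dtn1d_gvec1d_pred (N : ℕ) (L : ℕ → ℝ) (k : ℝ) (i : ℕ) (l : ℝ) (n : ℕ)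
    (hi1 : 1 ≤ i) (hiN : i < N) :
    dtn1d N L k (gvec1d i l n) (i + 1) =
      (((k * rcsc (k * L i) : ℝ) : ℂ) * ((-1 : ℂ) ^ n * (Real.sqrt (2 / l) : ℂ)), 0) := by
  have h0 : i ≠ 0 := by omega
  have h2 : i + 1 + 1 ≠ i := by omega
  by_cases h : i + 1 = N
  · subst h
    simp [dtn1d, gvec1d, h0]
  · simp [dtn1d, gvec1d, h0, h, h2]

theorem sqrt_two_div_mul_sqrt_two_div (a b : ℝ) (ha : 0 < a) :
    Real.sqrt (2 / a) * Real.sqrt (2 / b) = 2 / Real.sqrt (a * b) := by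
  rw [← Real.sqrt_mul (by positivity), div_mul_div_comm, Real.sqrt_div (by norm_num),
    Real.sqrt_mul_self (by norm_num)]

/-- off-diagonal entries of the one-dimensional frequency-dependent
capacitance matrix: for `1 ≤ i ≤ N−1` with `i, i+1 ∈ 𝒥`,
`𝒞_{i,i+1}(ω_0) = −(δ_i v_i²)/(v √(ℓ_i ℓ_{i+1})) s_i csc(k_0 ℓ_{i,i+1})` and
`𝒞_{i+1,i}(ω_0) = −(δ_{i+1} v_{i+1}²)/(v √(ℓ_i ℓ_{i+1})) s_i csc(k_0 ℓ_{i,i+1})`. -/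
theorem capacitance_offdiagonal
    (N : ℕ) (hN : 2 ≤ N)
    (xm xp : ℕ → ℝ)
    (hord : ∀ i, 1 ≤ i → i ≤ N → xm i < xp i)
    (hsep : ∀ i, 1 ≤ i → i < N → xp i < xm (i + 1))
    (v ω0 : ℝ) (hv : 0 < v) (hω0 : ω0 ≠ 0)
    (vj : ℕ → ℝ) (hvj : ∀ j, 1 ≤ j → j ≤ N → 0 < vj j)
    (δj : ℕ → ℂ)
    (hnores : ∀ i, 1 ≤ i → i < N → ∀ m : ℤ,
      ω0 / v * (xm (i + 1) - xp i) ≠ (m : ℝ) * π)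
    (i ni ni1 : ℕ) (hi1 : 1 ≤ i) (hiN : i < N)
    (hni : 0 < ni) (hni1 : 0 < ni1)
    (hresi : ω0 / vj i * (xp i - xm i) = (ni : ℝ) * π)
    (hresi1 : ω0 / vj (i + 1) * (xp (i + 1) - xm (i + 1)) = (ni1 : ℝ) * π) :
    (-(δj i * (vj i : ℂ) ^ 2) / (2 * (ω0 : ℂ)) *
      pair1d N
        (dtn1d N (fun t => xm (t + 1) - xp t) (ω0 / v)
          (gvec1d (i + 1) (xp (i + 1) - xm (i + 1)) ni1))
        (gvec1d i (xp i - xm i) ni)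
      = -(δj i * (vj i : ℂ) ^ 2) /
          ((v : ℂ) * ((Real.sqrt ((xp i - xm i) * (xp (i + 1) - xm (i + 1))) : ℝ) : ℂ)) *
          ((-1 : ℂ) ^ ni) * ((rcsc (ω0 / v * (xm (i + 1) - xp i)) : ℝ) : ℂ)) ∧
    (-(δj (i + 1) * (vj (i + 1) : ℂ) ^ 2) / (2 * (ω0 : ℂ)) *
      pair1d N
        (dtn1d N (fun t => xm (t + 1) - xp t) (ω0 / v) (gvec1d i (xp i - xm i) ni))
        (gvec1d (i + 1) (xp (i + 1) - xm (i + 1)) ni1)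
      = -(δj (i + 1) * (vj (i + 1) : ℂ) ^ 2) /
          ((v : ℂ) * ((Real.sqrt ((xp i - xm i) * (xp (i + 1) - xm (i + 1))) : ℝ) : ℂ)) *
          ((-1 : ℂ) ^ ni) * ((rcsc (ω0 / v * (xm (i + 1) - xp i)) : ℝ) : ℂ)) := by
  have hli : 0 < xp i - xm i := sub_pos.2 (hord i hi1 hiN.le)
  have hli1 : 0 < xp (i + 1) - xm (i + 1) := sub_pos.2 (hord (i + 1) (by omega) hiN)
  have hamp := congrArg (fun r : ℝ => (r : ℂ))
    (sqrt_two_div_mul_sqrt_two_div (xp i - xm i) (xp (i + 1) - xm (i + 1)) hli)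
  have hroot : ((Real.sqrt ((xp i - xm i) * (xp (i + 1) - xm (i + 1))) : ℝ) : ℂ) ≠ 0 :=
    Complex.ofReal_ne_zero.2 (Real.sqrt_pos.2 (mul_pos hli hli1)).ne'
  have hvC : (v : ℂ) ≠ 0 := Complex.ofReal_ne_zero.2 hv.ne'
  have hωC : (ω0 : ℂ) ≠ 0 := Complex.ofReal_ne_zero.2 hω0
  rw [pair1d_gvec1d N _ i _ _ hi1 hiN.le, pair1d_gvec1d N _ (i + 1) _ _ (by omega) hiN,
    dtn1d_gvec1d_succ N _ _ i _ _ hiN, dtn1d_gvec1d_pred N _ _ i _ _ hi1 hiN]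
  simp only [Complex.ofReal_mul, Complex.ofReal_div, Complex.ofReal_ofNat] at hamp ⊢
  generalize ((Real.sqrt ((xp i - xm i) * (xp (i + 1) - xm (i + 1))) : ℝ) : ℂ) = R at *
  generalize ((Real.sqrt (2 / (xp i - xm i)) : ℝ) : ℂ) = A at *
  generalize ((Real.sqrt (2 / (xp (i + 1) - xm (i + 1))) : ℝ) : ℂ) = B at *
  generalize ((rcsc (ω0 / v * (xm (i + 1) - xp i)) : ℝ) : ℂ) = c
  have key : (ω0 : ℂ) / v * c * ((-1) ^ ni * (A * B)) = 2 * ω0 * ((-1) ^ ni * c / (v * R)) := by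
    rw [hamp]
    field_simp
  constructor
  · calc _ = -(δj i * (vj i : ℂ) ^ 2) / (2 * (ω0 : ℂ)) *
          ((ω0 : ℂ) / v * c * ((-1) ^ ni * (A * B))) := by ring
      _ = _ := by
        rw [key]
        field_simp
  · calc _ = -(δj (i + 1) * (vj (i + 1) : ℂ) ^ 2) / (2 * (ω0 : ℂ)) *
          ((ω0 : ℂ) / v * c * ((-1) ^ ni * (A * B))) := by ring
      _ = _ := by
        rw [key]
        field_simp

end
end

section
/- Let p < q be integers, let ℓ_i > 0 for p ≤ i ≤ q, let ℓ_{i,i+1} > 0 for p ≤ i ≤ q−1, let n_i (p ≤ i ≤ q) and m_i (p ≤ i ≤ q−1) be integers, and let v, v_b > 0 be reals with r := v/v_b. Define the (q−p+1)×(q−p+1) real matrices M, C, Σ indexed by p ≤ i, j ≤ q by: M_{pp} = 1/(ℓ_p ℓ_{p,p+1}), M_{ii} = 1/(ℓ_i ℓ_{i−1,i}) + 1/(ℓ_i ℓ_{i,i+1}) for p < i < q, M_{qq} = 1/(ℓ_q ℓ_{q−1,q}), M_{i,i+1} = M_{i+1,i} = −(−1)^{n_i+m_i}/(ℓ_{i,i+1}·√(ℓ_i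 ℓ_{i+1})) for p ≤ i ≤ q−1, and M_{ij} = 0 for |i−j| > 1; C_{pp} = 1/(r ℓ_p ℓ_{p,p+1}), C_{ii} = 1/(r ℓ_i ℓ_{i−1,i}) + 1/(r ℓ_i ℓ_{i,i+1}) for p < i < q, C_{qq} = 1/(r ℓ_q ℓ_{q−1,q}), C_{i,i+1} = C_{i+1,i} = −1/(r ℓ_{i,i+1}·√(ℓ_i ℓ_{i+1})) for p ≤ i ≤ q−1, and C_{ij} = 0 for |i−j| > 1; Σ = diag(τ_p, …, τ_q) with τ_p = 1 and τ_{i+1} = τ_i·(−1)^{n_i+m_i} for p ≤ i ≤ q−1. Then v_b²·M = v·v_b·Σ·C·Σ. -/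
/-!
Since `τ_i² = 1` and `τ_{i+1} = τ_i (-1)^{n_i + m_i}`, conjugating by the diagonal sign matrix `Σ`
fixes the diagonal of `C` and multiplies its `(i, i+1)` and `(i+1, i)` entries by
`τ_i τ_{i+1} = (-1)^{n_i + m_i}`. This gives `M / r`, and `v v_b / r = v_b²` as `r = v / v_b`.
-/

noncomputable section

/-- The tridiagonal matrix `M` (entries given for indices `p ≤ i, j ≤ q`):
diagonal `M_{pp} = 1/(ℓ_p ℓ_{p,p+1})`, `M_{ii} = 1/(ℓ_i ℓ_{i−1,i}) + 1/(ℓ_i ℓ_{i,i+1})`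
for `p < i < q`, `M_{qq} = 1/(ℓ_q ℓ_{q−1,q})`; off-diagonal
`M_{i,i+1} = M_{i+1,i} = −(−1)^{n_i+m_i}/(ℓ_{i,i+1} √(ℓ_i ℓ_{i+1}))`; zero otherwise.
Here `L t` denotes the spacing `ℓ_{t,t+1}`. -/
def Mmat (p q : ℤ) (ℓ L : ℤ → ℝ) (n m : ℤ → ℤ) (i j : ℤ) : ℝ :=
  if i = j then
    (if i = p then 0 else 1 / (ℓ i * L (i - 1))) +
    (if i = q then 0 else 1 / (ℓ i * L i))
  else if j = i + 1 then -(-1 : ℝ) ^ (n i + m i) / (L i * Real.sqrt (ℓ i * ℓ j))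
  else if i = j + 1 then -(-1 : ℝ) ^ (n j + m j) / (L j * Real.sqrt (ℓ j * ℓ i))
  else 0

/-- The symmetrized Fabry–Pérot tridiagonal matrix `C` (entries given for
`p ≤ i, j ≤ q`): diagonal `C_{pp} = 1/(r ℓ_p ℓ_{p,p+1})`,
`C_{ii} = 1/(r ℓ_i ℓ_{i−1,i}) + 1/(r ℓ_i ℓ_{i,i+1})` for `p < i < q`,
`C_{qq} = 1/(r ℓ_q ℓ_{q−1,q})`; off-diagonal
`C_{i,i+1} = C_{i+1,i} = −1/(r ℓ_{i,i+1} √(ℓ_i ℓ_{i+1}))`; zero otherwise. -/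
def Cmat (p q : ℤ) (r : ℝ) (ℓ L : ℤ → ℝ) (i j : ℤ) : ℝ :=
  if i = j then
    (if i = p then 0 else 1 / (r * ℓ i * L (i - 1))) +
    (if i = q then 0 else 1 / (r * ℓ i * L i))
  else if j = i + 1 then -1 / (r * L i * Real.sqrt (ℓ i * ℓ j))
  else if i = j + 1 then -1 / (r * L j * Real.sqrt (ℓ j * ℓ i))
  else 0

/-- The diagonal signs `τ_i`, with `τ_p = 1` and `τ_{i+1} = τ_i (−1)^{n_i + m_i}`. -/
def tauSign (p : ℤ) (n m : ℤ → ℤ) (i : ℤ) : ℝ :=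
  ∏ t ∈ Finset.Ico p i, (-1 : ℝ) ^ (n t + m t)

lemma tauSign_succ (p : ℤ) (n m : ℤ → ℤ) (i : ℤ) (hi : p ≤ i) :
    tauSign p n m (i + 1) = tauSign p n m i * (-1 : ℝ) ^ (n i + m i) := by
  unfold tauSign
  rw [← Finset.insert_Ico_right_eq_Ico_add_one hi, Finset.prod_insert (by simp), mul_comm]

lemma tauSign_mul_self (p : ℤ) (n m : ℤ → ℤ) (i : ℤ) :
    tauSign p n m i * tauSign p n m i = 1 := by
  unfold tauSign
  rw [← Finset.prod_mul_distrib]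
  refine Finset.prod_eq_one fun t _ => ?_
  rw [← mul_zpow]
  norm_num

/-- the identity `v_b² M = v v_b Σ C Σ`, stated entrywise on the index
range `p ≤ i, j ≤ q` (the `(i,j)` entry of `Σ C Σ` being `τ_i C_{ij} τ_j`). -/
theorem vb_sq_M_eq_sigma_C_sigma
    (p q : ℤ) (hpq : p < q)
    (ℓ L : ℤ → ℝ)
    (hℓ : ∀ i, p ≤ i → i ≤ q → 0 < ℓ i)
    (hL : ∀ i, p ≤ i → i < q → 0 < L i)
    (n m : ℤ → ℤ)
    (v vb : ℝ) (hv : 0 < v) (hvb : 0 < vb) :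
    ∀ i j, p ≤ i → i ≤ q → p ≤ j → j ≤ q →
      vb ^ 2 * Mmat p q ℓ L n m i j
        = v * vb *
          (tauSign p n m i * Cmat p q (v / vb) ℓ L i j * tauSign p n m j) := by
  intro i j hi _ hj _
  -- `v v_b / r = v_b²`: the factor `1 / r` of every entry of `C` absorbs the prefactor.
  have hr : ∀ x y : ℝ, v * vb * (x / (v / vb * y)) = vb ^ 2 * (x / y) := by
    intro x y
    rw [← div_div, div_div_eq_mul_div, mul_div_assoc', mul_div_assoc']
    rw [mul_div_assoc']
    congr 1
    field_simp
  have hi2 := tauSign_mul_self p n m i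
  have hj2 := tauSign_mul_self p n m j
  unfold Mmat Cmat
  simp only [mul_assoc (v / vb)]
  by_cases h1 : i = j
  · subst h1
    have h := hr 1 (ℓ i * L (i - 1))
    have h' := hr 1 (ℓ i * L i)
    simp only [if_true]
    rw [mul_right_comm (tauSign p n m i), hi2, one_mul, mul_add, mul_add]
    split_ifs <;> simp only [mul_zero, h, h']
  · by_cases h2 : j = i + 1
    · subst h2
      have h := hr (-1) (L i * √(ℓ i * ℓ (i + 1)))
      simp only [h1, if_true, if_false]
      rw [tauSign_succ p n m i hi]
      linear_combination (-((-1 : ℝ) ^ (n i + m i) * tauSign p n m i ^ 2)) * h +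
          vb ^ 2 * (-1 : ℝ) ^ (n i + m i) / (L i * √(ℓ i * ℓ (i + 1))) * hi2
    · by_cases h3 : i = j + 1
      · subst h3
        have h := hr (-1) (L j * √(ℓ j * ℓ (j + 1)))
        simp only [h1, h2, if_true, if_false]
        rw [tauSign_succ p n m j hj]
        linear_combination (-((-1 : ℝ) ^ (n j + m j) * tauSign p n m j ^ 2)) * h +
          vb ^ 2 * (-1 : ℝ) ^ (n j + m j) / (L j * √(ℓ j * ℓ (j + 1))) * hj2
      · simp [h1, h2, h3]

end
end
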